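/- Weak duality for the semi-dual of the Unbalanced Optimal Transport problem with KL penalties: let X and Y be compact metric spaces, μ and ν probability measures on X and Y, c : X × Y → ℝ a continuous nonnegative cost function, and v : Y → ℝ a bounded continuous function. Then for every finite positive measure π on X × Y whose marginals π₀ (on X) and π₁ (on Y) are absolutely continuous with respect to μ and ν respectively, one has ∫_X (1 − e^{−v^c(x)}) dμ(x) + ∫_Y (1 − e^{−v(y)}) dν(y) ≤ ∫_{X×Y} c(x,y) dπ(x,y) + KL(π₀‖μ) + KL(π₁‖ν). -/

import Mathlib

open MeasureTheory
open scoped ENNReal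
open Classical

/-- The Kullback–Leibler divergence `KL(ρ‖μ) = ∫ (r log r + 1 - r) dμ` where `r = dρ/dμ`,
valued in `EReal`, with `KL(ρ‖μ) = +∞` when `ρ` is not absolutely continuous w.r.t. `μ`.
(The integrand `r log r + 1 - r` is nonnegative, so the lower integral captures the value.) -/
noncomputable def klDiv {α : Type*} [MeasurableSpace α] (ρ μ : Measure α) : EReal :=
  if ρ ≪ μ then
    (((∫⁻ x, ENNReal.ofReal ((ρ.rnDeriv μ x).toReal * Real.log (ρ.rnDeriv μ x).toReal
        + 1 - (ρ.rnDeriv μ x).toReal) ∂μ) : ℝ≥0∞) : EReal)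
  else ⊤

/-! Integrating `c ≥ u ⊕ v` against `π` reduces weak duality to one inequality per marginal,
`∫ (1 - e^{-u}) dμ ≤ ∫ u dρ + KL(ρ‖μ)`. This is the integrated Fenchel–Young inequality
`1 - e^{-t} ≤ r t + (r log r + 1 - r)` at `r = dρ/dμ`. The `c`-transform is an admissible `u`;
as an infimum of upper semicontinuous functions it is measurable.
-/

section KullbackLeibler

variable {α : Type*} [MeasurableSpace α] {ρ μ : Measure α} {f g u : α → ℝ}

theorem one_sub_exp_neg_sub_mul_le_klFun {r : ℝ} (hr : 0 ≤ r) (t : ℝ) :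
    1 - Real.exp (-t) - r * t ≤ InformationTheory.klFun r := by
  rw [InformationTheory.klFun_apply]
  rcases hr.eq_or_lt with rfl | hr
  · linarith [Real.exp_pos (-t)]
  · have tangent : -t - Real.log r + 1 ≤ Real.exp (-t) / r := by
      simpa only [Real.exp_sub, Real.exp_log hr] using Real.add_one_le_exp (-t - Real.log r)
    rw [le_div_iff₀ hr] at tangent
    linarith

theorem coe_integral_le_lintegral_ofReal (hf : Integrable f μ) (hfg : f ≤ᵐ[μ] g) :
    ((∫ x, f x ∂μ : ℝ) : EReal) ≤ ((∫⁻ x, ENNReal.ofReal (g x) ∂μ : ℝ≥0∞) : EReal) :=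
  calc ((∫ x, f x ∂μ : ℝ) : EReal)
      ≤ ((∫⁻ x, ENNReal.ofReal (f x) ∂μ).toReal : EReal) := by
        rw [integral_eq_lintegral_pos_part_sub_lintegral_neg_part hf, EReal.coe_le_coe_iff]
        exact sub_le_self _ ENNReal.toReal_nonneg
    _ = ((∫⁻ x, ENNReal.ofReal (f x) ∂μ : ℝ≥0∞) : EReal) :=
        EReal.coe_ennreal_toReal hf.lintegral_lt_top.ne
    _ ≤ ((∫⁻ x, ENNReal.ofReal (g x) ∂μ : ℝ≥0∞) : EReal) :=
        EReal.coe_ennreal_le_coe_ennreal_iff.2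
          (lintegral_mono_ae (hfg.mono fun _ => ENNReal.ofReal_le_ofReal))

theorem integral_one_sub_exp_neg_sub_integral_le_klDiv [SigmaFinite ρ]
    [ρ.HaveLebesgueDecomposition μ] (huρ : Integrable u ρ)
    (huμ : Integrable (fun x => 1 - Real.exp (-u x)) μ) :
    ((∫ x, (1 - Real.exp (-u x)) ∂μ - ∫ x, u x ∂ρ : ℝ) : EReal) ≤ klDiv ρ μ := by
  by_cases hρμ : ρ ≪ μ
  · have density_integrable : Integrable (fun x => (ρ.rnDeriv μ x).toReal * u x) μ :=
      (integrable_rnDeriv_smul_iff hρμ).2 huρ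
    rw [klDiv, if_pos hρμ, ← integral_toReal_rnDeriv_mul hρμ, ← integral_sub huμ density_integrable]
    exact coe_integral_le_lintegral_ofReal (huμ.sub density_integrable) <| ae_of_all _ fun x =>
      one_sub_exp_neg_sub_mul_le_klFun ENNReal.toReal_nonneg (u x)
  · simp only [klDiv, if_neg hρμ, le_top]

theorem integrable_one_sub_exp_neg [IsFiniteMeasure μ] (hu : AEStronglyMeasurable u μ) {m : ℝ}
    (hm : ∀ᵐ x ∂μ, m ≤ u x) : Integrable (fun x => 1 - Real.exp (-u x)) μ := by
  have exp_integrable : Integrable (fun x => Real.exp (-u x)) μ :=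
    Integrable.of_bound (Real.continuous_exp.comp_aestronglyMeasurable hu.neg) (Real.exp (-m))
      (hm.mono fun x hx => by
        rw [Real.norm_eq_abs, Real.abs_exp]
        exact Real.exp_le_exp.2 (neg_le_neg hx))
  exact (integrable_const 1).sub exp_integrable

end KullbackLeibler

theorem integral_map_fst_add_integral_map_snd_le {X Y : Type*} [MeasurableSpace X]
    [MeasurableSpace Y] {π : Measure (X × Y)} {c : X × Y → ℝ} {u : X → ℝ} {v : Y → ℝ}
    (hu : Integrable u (π.map Prod.fst)) (hv : Integrable v (π.map Prod.snd))
    (hc : Integrable c π) (huvc : ∀ x y, u x + v y ≤ c (x, y)) :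
    ∫ x, u x ∂π.map Prod.fst + ∫ y, v y ∂π.map Prod.snd ≤ ∫ p, c p ∂π := by
  have hu_fst : Integrable (fun p : X × Y => u p.1) π := hu.comp_measurable measurable_fst
  have hv_snd : Integrable (fun p : X × Y => v p.2) π := hv.comp_measurable measurable_snd
  rw [integral_map measurable_fst.aemeasurable hu.aestronglyMeasurable,
    integral_map measurable_snd.aemeasurable hv.aestronglyMeasurable,
    ← integral_add hu_fst hv_snd]
  exact integral_mono (hu_fst.add hv_snd) hc fun p => huvc p.1 p.2

theorem uot_dual_weak_duality {X Y : Type*} [MeasurableSpace X] [MeasurableSpace Y]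
    {μ : Measure X} {ν : Measure Y} [SigmaFinite μ] [SigmaFinite ν]
    {π : Measure (X × Y)} [IsFiniteMeasure π] {c : X × Y → ℝ} {u : X → ℝ} {v : Y → ℝ}
    (huμ : Integrable (fun x => 1 - Real.exp (-u x)) μ)
    (hvν : Integrable (fun y => 1 - Real.exp (-v y)) ν)
    (huπ : Integrable u (π.map Prod.fst)) (hvπ : Integrable v (π.map Prod.snd))
    (hcπ : Integrable c π) (huvc : ∀ x y, u x + v y ≤ c (x, y)) :
    ((∫ x, (1 - Real.exp (-u x)) ∂μ + ∫ y, (1 - Real.exp (-v y)) ∂ν : ℝ) : EReal) ≤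
      ((∫ p, c p ∂π : ℝ) : EReal) + klDiv (π.map Prod.fst) μ + klDiv (π.map Prod.snd) ν := by
  have transport := integral_map_fst_add_integral_map_snd_le huπ hvπ hcπ huvc
  have entropy_fst := integral_one_sub_exp_neg_sub_integral_le_klDiv huπ huμ
  have entropy_snd := integral_one_sub_exp_neg_sub_integral_le_klDiv hvπ hvν
  refine le_trans ?_ (add_le_add (add_le_add le_rfl entropy_fst) entropy_snd)
  rw [← EReal.coe_add, ← EReal.coe_add, EReal.coe_le_coe_iff]
  linarith

/-- The `c`-transform `v^c` of the potential `v`, the largest `u` with `u x + v y ≤ c (x, y)`.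
Being an infimum in `ℝ`, it takes the value `0` when `Y` is empty and at each `x` for which
`c (x, ·) - v` is not bounded below. -/
noncomputable def cTransform {X Y : Type*} (c : X × Y → ℝ) (v : Y → ℝ) (x : X) : ℝ :=
  ⨅ y, (c (x, y) - v y)

section cTransform

variable {X Y : Type*} {c : X × Y → ℝ} {v : Y → ℝ}

theorem cTransform_add_le {x : X} (hcv : BddBelow (Set.range fun y => c (x, y) - v y)) (y : Y) :
    cTransform c v x + v y ≤ c (x, y) :=
  le_sub_iff_add_le.1 (ciInf_le hcv y)

theorem le_cTransform [Nonempty Y] {x : X} {m : ℝ} (hm : ∀ y, m ≤ c (x, y) - v y) :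
    m ≤ cTransform c v x :=
  le_ciInf hm

theorem upperSemicontinuous_cTransform [TopologicalSpace X]
    (hc : ∀ y, UpperSemicontinuous fun x => c (x, y))
    (hcv : ∀ x, BddBelow (Set.range fun y => c (x, y) - v y)) :
    UpperSemicontinuous (cTransform c v) :=
  upperSemicontinuous_ciInf hcv fun y => by
    simpa only [sub_eq_add_neg] using (hc y).add (upperSemicontinuous_const (z := -v y))

theorem integrable_cTransform_map_fst [MeasurableSpace X] [MeasurableSpace Y] [Nonempty Y]
    {π : Measure (X × Y)} [IsFiniteMeasure π]
    (hmeas : AEStronglyMeasurable (cTransform c v) (π.map Prod.fst))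
    (hcπ : Integrable c π) (hvπ : Integrable v (π.map Prod.snd)) {m : ℝ}
    (hm : ∀ x y, m ≤ c (x, y) - v y) : Integrable (cTransform c v) (π.map Prod.fst) := by
  rw [integrable_map_measure hmeas measurable_fst.aemeasurable]
  have lower (p : X × Y) : m ≤ cTransform c v p.1 := le_cTransform (hm p.1)
  have upper (p : X × Y) : cTransform c v p.1 ≤ c p - v p.2 :=
    le_sub_iff_add_le.2 (cTransform_add_le ⟨m, Set.forall_mem_range.2 (hm p.1)⟩ p.2)
  exact integrable_of_le_of_le (hmeas.comp_measurable measurable_fst)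
    (ae_of_all _ lower) (ae_of_all _ upper) (integrable_const m)
    (hcπ.sub (hvπ.comp_measurable measurable_snd))

end cTransform

theorem uot_semidual_weak_duality_general {X Y : Type*} [TopologicalSpace X] [MeasurableSpace X]
    [OpensMeasurableSpace X] [MeasurableSpace Y] [Nonempty Y] (μ : Measure X) (ν : Measure Y)
    [IsFiniteMeasure μ] [SigmaFinite ν] (c : X × Y → ℝ)
    (hc : ∀ y, UpperSemicontinuous fun x => c (x, y)) (v : Y → ℝ)
    (hvν : Integrable (fun y => 1 - Real.exp (-v y)) ν)
    (hcv : BddBelow (Set.range fun p : X × Y => c p - v p.2))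
    (π : Measure (X × Y)) [IsFiniteMeasure π] (hcπ : Integrable c π)
    (hvπ : Integrable v (π.map Prod.snd)) :
    ((∫ x, (1 - Real.exp (-cTransform c v x)) ∂μ + ∫ y, (1 - Real.exp (-v y)) ∂ν : ℝ) : EReal) ≤
      ((∫ p, c p ∂π : ℝ) : EReal) + klDiv (π.map Prod.fst) μ + klDiv (π.map Prod.snd) ν := by
  obtain ⟨m, hm⟩ := hcv
  have lower (x : X) (y : Y) : m ≤ c (x, y) - v y := hm ⟨(x, y), rfl⟩
  have section_bddBelow (x : X) : BddBelow (Set.range fun y => c (x, y) - v y) :=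
    ⟨m, Set.forall_mem_range.2 (lower x)⟩
  have transform_measurable : Measurable (cTransform c v) :=
    (upperSemicontinuous_cTransform hc section_bddBelow).measurable
  exact uot_dual_weak_duality
    (integrable_one_sub_exp_neg transform_measurable.aestronglyMeasurable
      (ae_of_all _ fun x => le_cTransform (lower x)))
    hvν
    (integrable_cTransform_map_fst transform_measurable.aestronglyMeasurable hcπ hvπ lower)
    hvπ hcπ fun x y => cTransform_add_le (section_bddBelow x) y

/-- Weak duality for the semi-dual of the unbalanced optimal transport problem with KL
penalties: for compact metric spaces `X`, `Y`, probability measures `μ`, `ν`, a continuous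
nonnegative cost `c`, a bounded continuous `v : Y → ℝ`, and any finite positive measure `π`
on `X × Y` whose marginals are absolutely continuous w.r.t. `μ` and `ν`,
`∫ (1 - e^{-v^c}) dμ + ∫ (1 - e^{-v}) dν ≤ ∫ c dπ + KL(π₀‖μ) + KL(π₁‖ν)`,
where `v^c x = inf_y (c (x, y) - v y)` is the c-transform of `v`. -/
theorem uot_semidual_weak_duality
    {X Y : Type*} [MetricSpace X] [CompactSpace X] [MeasurableSpace X] [BorelSpace X]
    [MetricSpace Y] [CompactSpace Y] [MeasurableSpace Y] [BorelSpace Y]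
    (μ : Measure X) (ν : Measure Y) [IsProbabilityMeasure μ] [IsProbabilityMeasure ν]
    (c : X × Y → ℝ) (hc : Continuous c) (hc0 : ∀ p, 0 ≤ c p)
    (v : Y → ℝ) (hv : Continuous v) (hvb : ∃ M : ℝ, ∀ y, |v y| ≤ M)
    (π : Measure (X × Y)) [IsFiniteMeasure π]
    (hπ₀ : π.map Prod.fst ≪ μ) (hπ₁ : π.map Prod.snd ≪ ν) :
    (((∫ x, (1 - Real.exp (-(⨅ y : Y, (c (x, y) - v y)))) ∂μ)
        + ∫ y, (1 - Real.exp (-(v y))) ∂ν : ℝ) : EReal) ≤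
      ((∫ p, c p ∂π : ℝ) : EReal) + klDiv (π.map Prod.fst) μ + klDiv (π.map Prod.snd) ν := by
  have : Nonempty Y := ν.nonempty_of_neZero
  exact uot_semidual_weak_duality_general μ ν c
    (fun y => Continuous.upperSemicontinuous (by fun_prop)) v
    (Continuous.integrable_of_hasCompactSupport (by fun_prop) (.of_compactSpace _))
    (isCompact_range (by fun_prop)).bddBelow π
    (hc.integrable_of_hasCompactSupport (.of_compactSpace _))
    (hv.integrable_of_hasCompactSupport (.of_compactSpace _))
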